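/- Let λ = (1/(1 + √3))^{1/3}, let Q be the 7×7 block diagonal orthogonal matrix Q = diag(R_{π/3}, R_{π/6}, R_{π/2}, −1) and D(λ) = diag(I₄, λ I₂, λ³). Let κ > 0, and for k ∈ ℕ define g_k = −½ λ^{3k} Q^k D(λ)^{−k} 𝟙₇, G_k = −(λ^{3k}/(2√(κ + λ^{3k}))) Q^k D(λ)^{−k}, and α_k = λ^{3k}/(2(κ + λ^{3k})). Then G_k G_kᵀ is invertible, (G_k G_kᵀ)^{−1} = 4 λ^{−6k} (κ + λ^{3k}) D(λ)^{2k}, and −α_k (G_k G_kᵀ)^{−1} g_k = Q^k D(λ)^k 𝟙₇; that is, the Gauss–Newton step with matrix G_k, gradient g_k and step size α_k equals s_k = Q^k D(λ)^k 𝟙₇. -/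

import Mathlib

/-!
The identities are formal consequences of four facts about the two matrices: `Q` is orthogonal,
`D = D(λ)` is symmetric and invertible, and `Q` commutes with `D`. They pass to the powers
`P = Q ^ k` and `E = D ^ k`, so that `E² (P E⁻¹) (P E⁻¹)ᵀ = P E² E⁻² Pᵀ = 1` and
`E² (P E⁻¹) = P E`. The scalar factors then cancel because `λ > 0` and `κ + λ ^ (3 k) > 0`.
`Q` commutes with `D` because each rotation block of `Q` meets a scalar block of `D`
(`Q7_commute_D7`); `sq_mul_gram` and `sq_mul_step` are the two matrix identities.
-/

open Matrix
open scoped Real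

/-- `Q = diag(R_{π/3}, R_{π/6}, R_{π/2}, −1)`, a 7×7 orthogonal matrix. -/
noncomputable def Q7 : Matrix (Fin 7) (Fin 7) ℝ :=
  !![Real.cos (π / 3), -Real.sin (π / 3), 0, 0, 0, 0, 0;
     Real.sin (π / 3), Real.cos (π / 3), 0, 0, 0, 0, 0;
     0, 0, Real.cos (π / 6), -Real.sin (π / 6), 0, 0, 0;
     0, 0, Real.sin (π / 6), Real.cos (π / 6), 0, 0, 0;
     0, 0, 0, 0, Real.cos (π / 2), -Real.sin (π / 2), 0;
     0, 0, 0, 0, Real.sin (π / 2), Real.cos (π / 2), 0;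
     0, 0, 0, 0, 0, 0, -1]

/-- `D(λ) = diag(I₄, λ I₂, λ³)`. -/
noncomputable def D7 (l : ℝ) : Matrix (Fin 7) (Fin 7) ℝ :=
  Matrix.diagonal ![1, 1, 1, 1, l, l, l ^ 3]

/-- `λ = (1/(1 + √3))^{1/3}`. -/
noncomputable def lGN : ℝ := (1 / (1 + Real.sqrt 3)) ^ ((1 : ℝ) / 3)

/-- `g_k = −½ λ^{3k} Q^k D(λ)^{−k} 𝟙₇`. -/
noncomputable def gGN (k : ℕ) : Fin 7 → ℝ :=
  (-(lGN ^ (3 * k) / 2)) • ((Q7 ^ k * ((D7 lGN) ^ k)⁻¹) *ᵥ fun _ => 1)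

/-- `G_k = −(λ^{3k}/(2√(κ + λ^{3k}))) Q^k D(λ)^{−k}`. -/
noncomputable def GGN (κ : ℝ) (k : ℕ) : Matrix (Fin 7) (Fin 7) ℝ :=
  (-(lGN ^ (3 * k) / (2 * Real.sqrt (κ + lGN ^ (3 * k))))) • (Q7 ^ k * ((D7 lGN) ^ k)⁻¹)

/-- `α_k = λ^{3k}/(2(κ + λ^{3k}))`. -/
noncomputable def alphaGN (κ : ℝ) (k : ℕ) : ℝ :=
  lGN ^ (3 * k) / (2 * (κ + lGN ^ (3 * k)))

lemma lGN_pos : 0 < lGN := by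
  unfold lGN
  positivity

lemma Q7_mul_transpose : Q7 * Q7ᵀ = 1 := by
  have h3 := Real.cos_sq_add_sin_sq (π / 3)
  have h6 := Real.cos_sq_add_sin_sq (π / 6)
  have h2 := Real.cos_sq_add_sin_sq (π / 2)
  unfold Q7
  -- The angles play no role beyond `cos² + sin² = 1`; generalizing them keeps `simp` from
  -- evaluating the special values.
  generalize Real.cos (π / 3) = a at *
  generalize Real.sin (π / 3) = b at *
  generalize Real.cos (π / 6) = c at *
  generalize Real.sin (π / 6) = d at *
  generalize Real.cos (π / 2) = e at *
  generalize Real.sin (π / 2) = f at *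
  ext i j
  fin_cases i <;> fin_cases j <;>
    simp [Matrix.mul_apply, Fin.sum_univ_succ] <;> linarith

lemma Q7_commute_D7 (l : ℝ) : Commute Q7 (D7 l) := by
  unfold Q7 D7 Commute SemiconjBy
  ext i j
  rw [Matrix.mul_diagonal, Matrix.diagonal_mul]
  fin_cases i <;> fin_cases j <;> simp [mul_comm]

lemma D7_transpose (l : ℝ) : (D7 l)ᵀ = D7 l :=
  Matrix.diagonal_transpose _

lemma isUnit_D7 {l : ℝ} (hl : l ≠ 0) : IsUnit (D7 l) := by
  unfold D7
  rw [Matrix.isUnit_diagonal, Pi.isUnit_iff]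
  intro i
  fin_cases i <;> simp [hl]

/-- The direction part: applying `E²` to `P E⁻¹` turns the inverse power of `E` into a positive
one. -/
lemma sq_mul_step {n : Type*} [Fintype n] [DecidableEq n] {P E : Matrix n n ℝ}
    (hu : IsUnit E) (hc : Commute P E) : E * E * (P * E⁻¹) = P * E := by
  have hd : IsUnit E.det := (Matrix.isUnit_iff_isUnit_det E).1 hu
  have hEE : E * E⁻¹ = 1 := Matrix.mul_nonsing_inv E hd
  rw [← Matrix.mul_assoc, ← (hc.mul_right hc).eq, Matrix.mul_assoc, Matrix.mul_assoc, hEE,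
    Matrix.mul_one]

/-- The matrix part of the Gauss–Newton computation, for an orthogonal `P` commuting with a
symmetric invertible `E`: the inverse of `(P E⁻¹) (P E⁻¹)ᵀ` is `E²`, stated as a one-sided
product identity. -/
lemma sq_mul_gram {n : Type*} [Fintype n] [DecidableEq n] {P E : Matrix n n ℝ}
    (hP : P * Pᵀ = 1) (hE : Eᵀ = E) (hu : IsUnit E) (hc : Commute P E) :
    E * E * ((P * E⁻¹) * (P * E⁻¹)ᵀ) = 1 := by
  have hd : IsUnit E.det := (Matrix.isUnit_iff_isUnit_det E).1 hu
  rw [Matrix.transpose_mul, Matrix.transpose_nonsing_inv, hE, ← Matrix.mul_assoc,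
    sq_mul_step hu hc, Matrix.mul_assoc, Matrix.mul_nonsing_inv_cancel_left _ _ hd, hP]

lemma Q7_pow_mul_transpose (k : ℕ) : Q7 ^ k * (Q7 ^ k)ᵀ = 1 := by
  have hcomm : Commute Q7 Q7ᵀ := by
    rw [Commute, SemiconjBy, Q7_mul_transpose, mul_eq_one_comm.1 Q7_mul_transpose]
  rw [Matrix.transpose_pow, ← hcomm.mul_pow, Q7_mul_transpose, one_pow]

/-- the Gauss–Newton step with matrix `G_k`, gradient `g_k` and step size
`α_k` equals `s_k = Q^k D(λ)^k 𝟙₇`. -/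
theorem gauss_newton_step_stmt10 (κ : ℝ) (hκ : 0 < κ) (k : ℕ) :
    IsUnit (GGN κ k * (GGN κ k)ᵀ) ∧
    (GGN κ k * (GGN κ k)ᵀ)⁻¹ =
      (4 * (lGN ^ (6 * k))⁻¹ * (κ + lGN ^ (3 * k))) • (D7 lGN) ^ (2 * k) ∧
    (-(alphaGN κ k)) • ((GGN κ k * (GGN κ k)ᵀ)⁻¹ *ᵥ gGN k) =
      (Q7 ^ k * (D7 lGN) ^ k) *ᵥ fun _ => 1 := by
  have ht : 0 < lGN ^ (3 * k) := pow_pos lGN_pos _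
  have h6 : lGN ^ (6 * k) = (lGN ^ (3 * k)) ^ 2 := by rw [← pow_mul]; ring_nf
  have hu : IsUnit (D7 lGN ^ k) := (isUnit_D7 lGN_pos.ne').pow k
  have hc : Commute (Q7 ^ k) (D7 lGN ^ k) := (Q7_commute_D7 lGN).pow_pow k k
  have hE : (D7 lGN ^ k)ᵀ = D7 lGN ^ k := by rw [Matrix.transpose_pow, D7_transpose]
  have hD : D7 lGN ^ (2 * k) = D7 lGN ^ k * D7 lGN ^ k := by rw [two_mul, pow_add]
  have hgram := sq_mul_gram (Q7_pow_mul_transpose k) hE hu hc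
  have hstep := sq_mul_step hu hc
  unfold GGN gGN alphaGN
  rw [h6, hD]
  generalize lGN ^ (3 * k) = t at *
  generalize D7 lGN ^ k = E at *
  generalize Q7 ^ k = P at *
  have hs : 0 < κ + t := add_pos hκ ht
  generalize κ + t = s at *
  have hleft : ((4 * (t ^ 2)⁻¹ * s) • (E * E)) *
      ((-(t / (2 * √s))) • (P * E⁻¹) * ((-(t / (2 * √s))) • (P * E⁻¹))ᵀ) = 1 := by
    rw [Matrix.transpose_smul, Matrix.smul_mul, Matrix.mul_smul, Matrix.smul_mul,
      Matrix.mul_smul, Matrix.mul_smul, hgram, smul_smul, smul_smul]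
    have hq : √s ^ 2 = s := Real.sq_sqrt hs.le
    have hq0 : √s ≠ 0 := (Real.sqrt_pos.2 hs).ne'
    have hone : 4 * (t ^ 2)⁻¹ * s * (-(t / (2 * √s)) * -(t / (2 * √s))) = 1 := by
      field_simp
      linarith
    rw [mul_assoc, hone, one_smul]
  have hinv := Matrix.inv_eq_left_inv hleft
  refine ⟨IsUnit.of_mul_eq_one_right _ hleft, hinv, ?_⟩
  rw [hinv, Matrix.smul_mulVec, Matrix.mulVec_smul, Matrix.mulVec_mulVec, hstep, smul_smul,
    smul_smul]
  have hone : -(t / (2 * s)) * (4 * (t ^ 2)⁻¹ * s) * -(t / 2) = 1 := by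
    field_simp
    norm_num
  rw [hone, one_smul]
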